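/- Let α = (√5 − 1)/2 be the golden mean. Then the series Σ_{n≥1} 1/(D(1)·D(2)···D(n)) diverges to +∞; that is, the power series solution Σ_{k≥0} x^k/(D(1)···D(k)) of the linearized Master equation diverges at its radius of convergence (at x equal to that radius, and hence at every point of the circle of convergence, since the coefficients are positive). -/

import Mathlib

open Filter

/-- `D α k = 2(1 - cos(2πkα))`, the small denominator of the Master recursion. -/
noncomputable def D (α : ℝ) (k : ℕ) : ℝ := 2 * (1 - Real.cos (2 * Real.pi * k * α))

/-!
With `q = exp(2πiα)` one has `D α j = |1 - q ^ j| ^ 2`, so summability of `1 / (D(1)⋯D(n))` means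
that the coefficients `bₙ = 1 / ((1 - q)⋯(1 - q ^ n))` are square summable, i.e. that
`f(z) = ∑ bₙ zⁿ` lies in `L²` of the unit circle. The recursion `(1 - qⁿ) bₙ = bₙ₋₁` is the
functional equation `f(qz) = (1 - z) f(z)`. As `(1 - z) / (1 - z̄) = -z` for `|z| = 1`, the bounded
function `g = f / f̄` satisfies `g(qz) = -z g(z)`, so its Fourier coefficients all have the same
modulus. By Parseval they vanish, whence `f = 0`, contradicting `b₀ = 1`.
-/

section Fourier

open MeasureTheory AddCircle
open scoped ComplexConjugate

variable {T : ℝ}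

lemma norm_fourier_apply (n : ℤ) (x : AddCircle T) : ‖fourier n x‖ = 1 := by
  rw [fourier_apply, Circle.norm_coe]

lemma fourier_apply_add (n : ℤ) (x y : AddCircle T) :
    fourier n (x + y) = fourier n x * fourier n y := by
  simp only [fourier_apply, smul_add, toCircle_add, Circle.coe_mul]

lemma fourier_neg_mul_fourier (n : ℤ) (x : AddCircle T) : fourier (-n) x * fourier n x = 1 := by
  rw [← fourier_add, neg_add_cancel, fourier_zero]

lemma fourier_eq_one_iff (hT : T ≠ 0) {n : ℤ} {x : AddCircle T} :
    fourier n x = 1 ↔ n • x = 0 := by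
  rw [fourier_apply, Circle.coe_eq_one, ← toCircle_zero (T := T), (injective_toCircle hT).eq_iff]

lemma one_sub_fourier_div_conj {n : ℤ} {x : AddCircle T} (h : fourier n x ≠ 1) :
    (1 - fourier n x) / conj (1 - fourier n x) = -fourier n x := by
  rw [div_eq_iff ((map_ne_zero _).mpr (sub_ne_zero.mpr h.symm)), map_sub, map_one, ← fourier_neg]
  linear_combination -fourier_neg_mul_fourier n x

variable [Fact (0 < T)]

lemma fourierCoeff_comp_add_right {E : Type*} [NormedAddCommGroup E] [NormedSpace ℂ E]
    (f : AddCircle T → E) (u : AddCircle T) (n : ℤ) :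
    fourierCoeff (fun t => f (t + u)) n = fourier n u • fourierCoeff f n := by
  have hshift (t : AddCircle T) : fourier (-n) t = fourier n u * fourier (-n) (t + u) := by
    rw [fourier_apply_add]
    linear_combination -fourier (-n) t * fourier_neg_mul_fourier n u
  calc fourierCoeff (fun t => f (t + u)) n
      = ∫ t, fourier n u • (fourier (-n) (t + u) • f (t + u)) ∂haarAddCircle :=
        integral_congr_ae (ae_of_all _ fun t => by simp only [smul_smul, ← hshift])
    _ = fourier n u • fourierCoeff f n := by
        rw [integral_smul, integral_add_right_eq_self fun t => fourier (-n) t • f t, fourierCoeff]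

lemma fourierCoeff_fourier_smul {E : Type*} [NormedAddCommGroup E] [NormedSpace ℂ E]
    (f : AddCircle T → E) (m n : ℤ) :
    fourierCoeff (fun t => fourier m t • f t) n = fourierCoeff f (n - m) := by
  simp only [fourierCoeff, smul_smul, ← fourier_add]
  rw [neg_sub, neg_add_eq_sub]

lemma fourierCoeff_zero {E : Type*} [NormedAddCommGroup E] [NormedSpace ℂ E] :
    fourierCoeff (0 : AddCircle T → E) = 0 := by
  ext n
  simp only [fourierCoeff, Pi.zero_apply, smul_zero, integral_zero]

lemma ae_eq_of_fourierCoeff_eq {f g : AddCircle T → ℂ} (hf : MemLp f 2 haarAddCircle)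
    (hg : MemLp g 2 haarAddCircle) (h : fourierCoeff f = fourierCoeff g) :
    f =ᵐ[haarAddCircle] g := by
  refine (MemLp.toLp_eq_toLp_iff hf hg).mp (fourierBasis.repr.injective ?_)
  ext n
  rw [fourierBasis_repr, fourierBasis_repr, fourierCoeff_congr_ae hf.coeFn_toLp,
    fourierCoeff_congr_ae hg.coeFn_toLp, h]

lemma tendsto_norm_fourierCoeff_cofinite {f : AddCircle T → ℂ} (hf : MemLp f 2 haarAddCircle) :
    Tendsto (fun n => ‖fourierCoeff f n‖) cofinite (nhds 0) := by
  have h := (hasSum_sq_fourierCoeff (hf.toLp f)).summable.tendsto_cofinite_zero.sqrt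
  simpa only [fourierCoeff_congr_ae hf.coeFn_toLp, Real.sqrt_sq (norm_nonneg _),
    Real.sqrt_zero] using h

lemma exists_memLp_fourierCoeff_eq {a : ℤ → ℂ} (ha : Summable fun n => ‖a n‖ ^ 2) :
    ∃ f : AddCircle T → ℂ, MemLp f 2 haarAddCircle ∧ fourierCoeff f = a := by
  have hmem : Memℓp a 2 := memℓp_gen (by simpa using ha)
  refine ⟨fourierBasis.repr.symm ⟨a, hmem⟩, Lp.memLp _, funext fun n => ?_⟩
  rw [← fourierBasis_repr, LinearIsometryEquiv.apply_symm_apply]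

lemma ae_eq_zero_of_comp_add_eq_fourier_mul {g : AddCircle T → ℂ} (hg : MemLp g 2 haarAddCircle)
    {u : AddCircle T} {c : ℂ} (hc : ‖c‖ = 1) {m : ℤ} (hm : m ≠ 0)
    (h : (fun t => g (t + u)) =ᵐ[haarAddCircle] fun t => c * (fourier m t * g t)) :
    g =ᵐ[haarAddCircle] 0 := by
  have hper : Function.Periodic (fun n => ‖fourierCoeff g n‖) m := by
    intro n
    have hcoeff : fourier (n + m) u * fourierCoeff g (n + m) = c * fourierCoeff g n := by
      have := congrFun (fourierCoeff_congr_ae h) (n + m)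
      simp only [← smul_eq_mul (fourier m _)] at this
      rwa [fourierCoeff_comp_add_right, fourierCoeff.const_mul, fourierCoeff_fourier_smul,
        add_sub_cancel_right] at this
    have hnorm := congrArg norm hcoeff
    rwa [norm_mul, norm_mul, hc, one_mul, norm_fourier_apply, one_mul] at hnorm
  have hinj (n : ℤ) : Function.Injective fun k : ℤ => n + k * m :=
    (add_right_injective n).comp (mul_left_injective₀ hm)
  have hzero (n : ℤ) : ‖fourierCoeff g n‖ = 0 := by
    refine tendsto_nhds_unique (f := fun _ : ℤ => ‖fourierCoeff g n‖) tendsto_const_nhds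
      (((tendsto_norm_fourierCoeff_cofinite hg).comp (hinj n).tendsto_cofinite).congr fun k => ?_)
    exact hper.int_mul k n
  refine ae_eq_of_fourierCoeff_eq hg MemLp.zero (funext fun n => ?_)
  rw [norm_eq_zero.mp (hzero n), fourierCoeff_zero, Pi.zero_apply]

lemma ae_fourier_one_ne_one : ∀ᵐ t : AddCircle T ∂haarAddCircle, fourier 1 t ≠ 1 := by
  have : Nontrivial (AddCircle T) := by
    refine ⟨(T / (2 : ℕ) : ℝ), 0, fun h => ?_⟩
    have horder := addOrderOf_period_div (p := T) two_pos
    rw [h, addOrderOf_zero] at horder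
    exact OfNat.one_ne_ofNat 2 horder
  filter_upwards [Measure.ae_ne haarAddCircle (0 : AddCircle T)] with t ht
  rwa [ne_eq, fourier_eq_one_iff (Fact.out : 0 < T).ne', one_zsmul]

lemma ae_eq_zero_of_comp_add_eq_one_sub_fourier_mul {f : AddCircle T → ℂ}
    (hf : AEStronglyMeasurable f haarAddCircle) {u : AddCircle T}
    (h : (fun t => f (t + u)) =ᵐ[haarAddCircle] fun t => (1 - fourier 1 t) * f t) :
    f =ᵐ[haarAddCircle] 0 := by
  set g : AddCircle T → ℂ := fun t => f t / conj (f t)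
  have hg : MemLp g 2 haarAddCircle := by
    refine MemLp.of_bound ?_ 1 (ae_of_all _ fun t => ?_)
    · exact (hf.aemeasurable.div
        (RCLike.continuous_conj.measurable.comp_aemeasurable hf.aemeasurable)).aestronglyMeasurable
    · rw [norm_div, RCLike.norm_conj]
      exact div_self_le_one _
  have hgu : (fun t => g (t + u)) =ᵐ[haarAddCircle] fun t => -1 * (fourier 1 t * g t) := by
    filter_upwards [h, ae_fourier_one_ne_one] with t ht hne
    calc g (t + u) = (1 - fourier 1 t) * f t / (conj (1 - fourier 1 t) * conj (f t)) := by
          simp only [g, ht, map_mul]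
      _ = -1 * (fourier 1 t * g t) := by
          rw [mul_div_mul_comm, one_sub_fourier_div_conj hne, neg_mul, neg_one_mul]
  filter_upwards [ae_eq_zero_of_comp_add_eq_fourier_mul hg (by simp) one_ne_zero hgu] with t ht
  simpa [g] using ht

lemma eq_zero_of_summable_of_one_sub_fourier_mul_eq {a : ℤ → ℂ}
    (ha : Summable fun n => ‖a n‖ ^ 2) {u : AddCircle T}
    (h : ∀ n, (1 - fourier n u) * a n = a (n - 1)) : a = 0 := by
  obtain ⟨f, hf, rfl⟩ := exists_memLp_fourierCoeff_eq (T := T) ha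
  have hshift : MemLp (fun t => f (t + u)) 2 haarAddCircle :=
    hf.comp_measurePreserving (measurePreserving_add_right haarAddCircle u)
  have hmul : MemLp (fun t => fourier 1 t • f t) 2 haarAddCircle :=
    hf.congr_norm ((map_continuous (fourier 1)).aestronglyMeasurable.smul hf.1)
      (ae_of_all _ fun t => by rw [norm_smul, norm_fourier_apply, one_mul])
  have hsum : f =ᵐ[haarAddCircle] (fun t => f (t + u)) + fun t => fourier 1 t • f t := by
    refine ae_eq_of_fourierCoeff_eq hf (hshift.add hmul) (funext fun n => ?_)
    rw [fourierCoeff.add (hshift.integrable one_le_two) (hmul.integrable one_le_two), Pi.add_apply,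
      fourierCoeff_comp_add_right, fourierCoeff_fourier_smul, ← h, smul_eq_mul]
    ring
  have hzero : f =ᵐ[haarAddCircle] 0 := by
    refine ae_eq_zero_of_comp_add_eq_one_sub_fourier_mul hf.1 (u := u) ?_
    filter_upwards [hsum] with t ht
    rw [Pi.add_apply, smul_eq_mul] at ht
    linear_combination -ht
  rw [fourierCoeff_congr_ae hzero, fourierCoeff_zero]

lemma eq_zero_of_summable_of_one_sub_fourier_succ_mul_eq {b : ℕ → ℂ}
    (hb : Summable fun n => ‖b n‖ ^ 2) {u : AddCircle T}
    (h : ∀ n : ℕ, (1 - fourier (n + 1) u) * b (n + 1) = b n) : b = 0 := by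
  set a : ℤ → ℂ := Function.extend (Nat.cast : ℕ → ℤ) b 0
  have ha_natCast (n : ℕ) : a n = b n := Nat.cast_injective.extend_apply b 0 n
  have ha_neg {n : ℤ} (hn : n < 0) : a n = 0 :=
    Function.extend_apply' _ _ _ fun ⟨k, hk⟩ => by lia
  have hsum : Summable fun n => ‖a n‖ ^ 2 := by
    refine (Nat.cast_injective.summable_iff fun n hn => ?_).mp
      (hb.congr fun n => by rw [Function.comp_apply, ha_natCast])
    rw [show a n = 0 from Function.extend_apply' _ _ _ hn, norm_zero, zero_pow two_ne_zero]
  have hrec (n : ℤ) : (1 - fourier n u) * a n = a (n - 1) := by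
    rcases lt_trichotomy n 0 with hn | rfl | hn
    · rw [ha_neg hn, ha_neg (by lia), mul_zero]
    · rw [fourier_zero, sub_self, zero_mul, ha_neg (by lia)]
    · obtain ⟨k, rfl⟩ : ∃ k : ℕ, n = k + 1 := ⟨(n - 1).toNat, by lia⟩
      rw [add_sub_cancel_right, ha_natCast, ← h k, ← ha_natCast, Nat.cast_add_one]
  have ha := eq_zero_of_summable_of_one_sub_fourier_mul_eq hsum hrec
  exact funext fun n => by rw [← ha_natCast, ha, Pi.zero_apply, Pi.zero_apply]

lemma fourier_ne_one_of_not_isOfFinAddOrder {u : AddCircle T} (hu : ¬ IsOfFinAddOrder u) {n : ℤ}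
    (hn : n ≠ 0) : fourier n u ≠ 1 := by
  rw [ne_eq, fourier_eq_one_iff (Fact.out : 0 < T).ne']
  exact fun hzero => hu (isOfFinAddOrder_iff_zsmul_eq_zero.mpr ⟨n, hn, hzero⟩)

lemma not_summable_one_div_prod_norm_one_sub_fourier_sq {u : AddCircle T}
    (hu : ¬ IsOfFinAddOrder u) :
    ¬ Summable fun n : ℕ => 1 / ∏ j ∈ Finset.Icc 1 n, ‖1 - fourier (j : ℤ) u‖ ^ 2 := by
  set b : ℕ → ℂ := fun n => (∏ j ∈ Finset.Icc 1 n, (1 - fourier (j : ℤ) u))⁻¹ with hb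
  intro hsum
  have hrec (n : ℕ) : (1 - fourier (n + 1) u) * b (n + 1) = b n := by
    have hne : 1 - fourier (n + 1) u ≠ 0 :=
      sub_ne_zero.mpr (fourier_ne_one_of_not_isOfFinAddOrder hu (by lia)).symm
    simp only [hb]
    rw [Finset.prod_Icc_succ_top (by lia), mul_inv_rev, Nat.cast_add_one, mul_inv_cancel_left₀ hne]
  have hzero : b = 0 := by
    refine eq_zero_of_summable_of_one_sub_fourier_succ_mul_eq (hsum.congr fun n => ?_) hrec
    rw [norm_inv, norm_prod, inv_pow, Finset.prod_pow, one_div]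
  simpa [hb] using congrFun hzero 0

end Fourier

section SmallDenominator

lemma D_eq_norm_one_sub_fourier_sq (α : ℝ) (k : ℕ) :
    D α k = ‖1 - fourier (k : ℤ) (α : UnitAddCircle)‖ ^ 2 := by
  have hre : (fourier (k : ℤ) (α : UnitAddCircle)).re = Real.cos (2 * Real.pi * k * α) := by
    rw [fourier_coe_apply, ← Complex.exp_ofReal_mul_I_re]
    congr 2
    push_cast
    ring
  rw [norm_sub_rev, Complex.norm_sub_one_sq_eq_of_norm_eq_one (norm_fourier_apply _ _), hre, D]

variable {α : ℝ} (hα : Irrational α)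
include hα

lemma not_isOfFinAddOrder_coe_of_irrational : ¬ IsOfFinAddOrder (α : UnitAddCircle) := by
  rw [AddCircle.isOfFinAddOrder_iff_exists_rat_eq_div, div_one]
  exact hα

lemma D_pos_of_irrational {k : ℕ} (hk : k ≠ 0) : 0 < D α k := by
  rw [D_eq_norm_one_sub_fourier_sq]
  have hne := fourier_ne_one_of_not_isOfFinAddOrder (not_isOfFinAddOrder_coe_of_irrational hα)
    (Nat.cast_ne_zero.mpr hk)
  exact pow_pos (norm_pos_iff.mpr (sub_ne_zero.mpr hne.symm)) 2

lemma prod_D_pos_of_irrational (n : ℕ) : 0 < ∏ j ∈ Finset.Icc 1 n, D α j :=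
  Finset.prod_pos fun _ hj =>
    D_pos_of_irrational hα (Nat.one_le_iff_ne_zero.mp (Finset.mem_Icc.mp hj).1)

lemma not_summable_one_div_prod_D_of_irrational :
    ¬ Summable fun n : ℕ => 1 / ∏ j ∈ Finset.Icc 1 n, D α j := by
  simp only [D_eq_norm_one_sub_fourier_sq]
  exact not_summable_one_div_prod_norm_one_sub_fourier_sq
    (not_isOfFinAddOrder_coe_of_irrational hα)

end SmallDenominator

lemma tendsto_sum_Icc_one_atTop_of_not_summable {a : ℕ → ℝ} (ha : ∀ n, 0 ≤ a n)
    (h : ¬ Summable a) : Tendsto (fun N => ∑ n ∈ Finset.Icc 1 N, a n) atTop atTop := by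
  have hshift : ¬ Summable fun n => a (n + 1) := mt (summable_nat_add_iff 1).mp h
  refine ((not_summable_iff_tendsto_nat_atTop_of_nonneg fun n => ha (n + 1)).mp hshift).congr
    fun N => ?_
  rw [Finset.range_eq_Ico, Finset.sum_Ico_add' a 0 N 1, zero_add, Finset.Ico_add_one_right_eq_Icc]

theorem stmt14_general {α : ℝ} (hα : Irrational α) :
    Tendsto (fun N : ℕ => ∑ n ∈ Finset.Icc 1 N, 1 / ∏ j ∈ Finset.Icc 1 n, D α j)
      atTop atTop ∧
    ∀ x : ℂ, ‖x‖ = 1 →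
      ¬ Summable fun k : ℕ => x ^ k / ∏ j ∈ Finset.Icc 1 k, (D α j : ℂ) := by
  have hdiv := not_summable_one_div_prod_D_of_irrational hα
  have hpos := prod_D_pos_of_irrational hα
  refine ⟨tendsto_sum_Icc_one_atTop_of_not_summable (fun n => (one_div_pos.mpr (hpos n)).le) hdiv,
    fun x hx hsum => hdiv (hsum.norm.congr fun k => ?_)⟩
  rw [norm_div, norm_pow, hx, one_pow, ← Complex.ofReal_prod, Complex.norm_real,
    Real.norm_of_nonneg (hpos k).le]

/-- for the golden mean `α = (√5 - 1)/2`, the series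
`Σ_{n≥1} 1/(D(1)⋯D(n))` diverges to `+∞`; hence the power series
`Σ_{k≥0} x^k/(D(1)⋯D(k))` (the linear solution, whose radius of convergence is 1)
diverges at its radius of convergence, and — since its coefficients are positive —
at every point of the circle of convergence `‖x‖ = 1`. -/
theorem stmt14 (α : ℝ) (hα : α = (Real.sqrt 5 - 1) / 2) :
    Tendsto (fun N : ℕ => ∑ n ∈ Finset.Icc 1 N, 1 / ∏ j ∈ Finset.Icc 1 n, D α j)
      atTop atTop ∧
    ∀ x : ℂ, ‖x‖ = 1 →
      ¬ Summable fun k : ℕ => x ^ k / ∏ j ∈ Finset.Icc 1 k, (D α j : ℂ) := by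
  have hneg : α = -Real.goldenConj := by rw [hα, Real.goldenConj]; ring
  exact stmt14_general (hneg ▸ Real.goldenConj_irrational.neg)
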